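/- Let (C,⊗,I) be a small productive symmetric monoidal category and X, Y sequences of objects. The canonical truncation map from the set of dinatural sequences eSeq(X,Y) to the limit lim_{n∈ℕ} Stage_n(X,Y) of the chain of truncation maps π_{n+1,n} : Stage_{n+1}(X,Y) → Stage_n(X,Y) is surjective; consequently it induces a bijection between the set of observational sequences oSeq(X,Y) and lim_{n∈ℕ} Stage_n(X,Y). -/

import Mathlib

/-!
STATEMENT 17: In a small productive symmetric monoidal category, the canonical
truncation map from dinatural sequences `eSeq(X,Y)` to the limit
`lim_n Stage_n(X,Y)` of the chain of truncations is surjective; consequently it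
induces a bijection between observational sequences `oSeq(X,Y)` and the limit.
-/

open CategoryTheory MonoidalCategory

namespace Stmt17

universe v u

variable {C : Type u} [Category.{v} C] [MonoidalCategory C] [SymmetricCategory C]

/-- Sequences of objects of `C`. -/
abbrev Seq (C : Type u) [Category.{v} C] := ℕ → C

/-- An intensional sequence from `X` to `Y`. -/
structure SeqTup (X Y : Seq C) where
  M : ℕ → C
  head : (𝟙_ C ⊗ X 0 : C) ⟶ M 0 ⊗ Y 0
  step : ∀ n, (M n ⊗ X (n + 1) : C) ⟶ M (n + 1) ⊗ Y (n + 1)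

/-- The dinaturality (sliding) relation on intensional sequences. -/
def SeqRel (X Y : Seq C) : SeqTup X Y → SeqTup X Y → Prop := fun a b =>
  ∃ (M N : ℕ → C) (r : ∀ n, N n ⟶ M n)
    (f0 : (𝟙_ C ⊗ X 0 : C) ⟶ N 0 ⊗ Y 0)
    (f : ∀ n, (M n ⊗ X (n + 1) : C) ⟶ N (n + 1) ⊗ Y (n + 1)),
    a = ⟨M, f0 ≫ (r 0 ▷ Y 0), fun n => f n ≫ (r (n + 1) ▷ Y (n + 1))⟩ ∧
    b = ⟨N, f0, fun n => (r n ▷ X (n + 1)) ≫ f n⟩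

/-- Dinatural sequences: intensional sequences modulo dinaturality. -/
def eSeq (X Y : Seq C) : Type (max u v) := Quot (SeqRel X Y)

/-- A tuple representing an `n`-stage process. -/
structure StageTup (n : ℕ) (X Y : Seq C) where
  M : Fin (n + 1) → C
  head : (𝟙_ C ⊗ X 0 : C) ⟶ M 0 ⊗ Y 0
  step : ∀ i : Fin n, (M i.castSucc ⊗ X (i.1 + 1) : C) ⟶ M i.succ ⊗ Y (i.1 + 1)

/-- The dinaturality (sliding) relation on `n`-stage tuples. -/
def StageRel (n : ℕ) (X Y : Seq C) : StageTup n X Y → StageTup n X Y → Prop :=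
  fun a b =>
    ∃ (M N : Fin (n + 1) → C) (r : ∀ i, N i ⟶ M i)
      (f0 : (𝟙_ C ⊗ X 0 : C) ⟶ N 0 ⊗ Y 0)
      (f : ∀ i : Fin n, (M i.castSucc ⊗ X (i.1 + 1) : C) ⟶ N i.succ ⊗ Y (i.1 + 1)),
      a = ⟨M, f0 ≫ (r 0 ▷ Y 0), fun i => f i ≫ (r i.succ ▷ Y (i.1 + 1))⟩ ∧
      b = ⟨N, f0, fun i => (r i.castSucc ▷ X (i.1 + 1)) ≫ f i⟩

/-- `n`-stage processes: tuples modulo dinaturality. -/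
def Stage (n : ℕ) (X Y : Seq C) : Type (max u v) := Quot (StageRel n X Y)

/-- Truncation of an intensional sequence to an `n`-stage tuple. -/
def truncTup (n : ℕ) {X Y : Seq C} (T : SeqTup X Y) : StageTup n X Y where
  M := fun i => T.M i.1
  head := T.head
  step := fun i => T.step i.1

/-- Truncation of an `(n+1)`-stage tuple to an `n`-stage tuple. -/
def truncStage (n : ℕ) {X Y : Seq C} (S : StageTup (n + 1) X Y) : StageTup n X Y where
  M := fun i => S.M i.castSucc
  head := S.head
  step := fun i => S.step i.castSucc

/-- Observational equivalence of intensional sequences. -/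
def obsEq (X Y : Seq C) (f g : SeqTup X Y) : Prop :=
  ∀ n, Quot.mk (StageRel n X Y) (truncTup n f) = Quot.mk (StageRel n X Y) (truncTup n g)

/-- Observational sequences: intensional sequences modulo dinaturality and
observational equivalence. -/
def oSeq (X Y : Seq C) : Type (max u v) := Quot (obsEq X Y)

/-- The truncation map on observational sequences. -/
def oTrunc (n : ℕ) {X Y : Seq C} : oSeq X Y → Stage n X Y :=
  Quot.lift (fun T => Quot.mk (StageRel n X Y) (truncTup n T)) fun _ _ h => h n

/-! ### Productivity -/

/-- Representatives of 1-stage processes. -/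
def OneStageEl (X₀ Y₀ : C) : Type (max u v) := Σ M : C, (X₀ ⟶ M ⊗ Y₀)

/-- Dinaturality in the memory. -/
def OneStageRel (X₀ Y₀ : C) : OneStageEl X₀ Y₀ → OneStageEl X₀ Y₀ → Prop := fun a b =>
  ∃ (M N : C) (r : N ⟶ M) (f : X₀ ⟶ N ⊗ Y₀),
    a = ⟨M, f ≫ (r ▷ Y₀)⟩ ∧ b = ⟨N, f⟩

/-- 1-stage processes. -/
def OneStage (X₀ Y₀ : C) : Type (max u v) := Quot (OneStageRel X₀ Y₀)

/-- The 1-stage process of a representative. -/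
def mkOne {X₀ Y₀ : C} (M : C) (f : X₀ ⟶ M ⊗ Y₀) : OneStage X₀ Y₀ := Quot.mk _ ⟨M, f⟩

/-- `(α_i ⊗ id_A) ≫ (u ⊗ id_{Y₀})`, up to symmetry and associators. -/
def sideload {X₀ Y₀ Mi A U B : C} (αi : X₀ ⟶ Mi ⊗ Y₀) (u : (Mi ⊗ A : C) ⟶ U ⊗ B) :
    (X₀ ⊗ A : C) ⟶ U ⊗ (B ⊗ Y₀) :=
  (αi ▷ A) ≫ (α_ Mi Y₀ A).hom ≫ (Mi ◁ (β_ Y₀ A).hom) ≫ (α_ Mi A Y₀).inv ≫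
    (u ▷ Y₀) ≫ (α_ U B Y₀).hom

/-- Termination of a 1-stage process. -/
def Terminating {X₀ Y₀ : C} (a : OneStage X₀ Y₀) : Prop :=
  ∃ (M₀ : C) (α₀ : X₀ ⟶ M₀ ⊗ Y₀)
    (s : ∀ (Mi : C) (αi : X₀ ⟶ Mi ⊗ Y₀), mkOne Mi αi = a → (M₀ ⟶ Mi)),
    (∀ (Mi : C) (αi : X₀ ⟶ Mi ⊗ Y₀) (h : mkOne Mi αi = a),
      αi = α₀ ≫ (s Mi αi h ▷ Y₀)) ∧
    (∀ (Mi Mj : C) (αi : X₀ ⟶ Mi ⊗ Y₀) (αj : X₀ ⟶ Mj ⊗ Y₀)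
      (hi : mkOne Mi αi = a) (hj : mkOne Mj αj = a)
      (A U V B : C) (u : (Mi ⊗ A : C) ⟶ U ⊗ B) (v : (Mj ⊗ A : C) ⟶ V ⊗ B),
      mkOne U (sideload αi u) = mkOne V (sideload αj v) →
      mkOne U ((s Mi αi hi ▷ A) ≫ u) = mkOne V ((s Mj αj hj ▷ A) ≫ v))

/-- Productivity. -/
def Productive (C : Type u) [Category.{v} C] [MonoidalCategory C] [SymmetricCategory C] :
    Prop :=
  ∀ (X₀ Y₀ : C) (a : OneStage X₀ Y₀), Terminating a

set_option linter.unusedSectionVars false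

/-! ### Operations on 1-stage processes -/

/-- Precomposition of a 1-stage process with a morphism. -/
def OneStage.pre {Z Z' Y₀ : C} (p : Z' ⟶ Z) : OneStage Z Y₀ → OneStage Z' Y₀ :=
  Quot.lift (fun x => mkOne x.1 (p ≫ x.2)) (by
    rintro _ _ ⟨M, N, r, f, rfl, rfl⟩
    exact Quot.sound ⟨M, N, r, p ≫ f, congrArg (Sigma.mk M) (Category.assoc _ _ _).symm, rfl⟩)

lemma OneStage.pre_pre {Z Z' Z'' Y₀ : C} (p : Z' ⟶ Z) (q : Z'' ⟶ Z') (x : OneStage Z Y₀) :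
    OneStage.pre q (OneStage.pre p x) = OneStage.pre (q ≫ p) x := by
  obtain ⟨M, f⟩ := x
  change mkOne M (q ≫ p ≫ f) = mkOne M ((q ≫ p) ≫ f)
  rw [Category.assoc]

lemma OneStage.pre_id {Z Y₀ : C} (x : OneStage Z Y₀) : OneStage.pre (𝟙 Z) x = x := by
  obtain ⟨M, f⟩ := x
  change mkOne M (𝟙 Z ≫ f) = mkOne M f
  rw [Category.id_comp]

lemma mkOne_whiskerRight {Z Y₀ M N : C} (f : Z ⟶ N ⊗ Y₀) (r : N ⟶ M) :
    mkOne M (f ≫ r ▷ Y₀) = mkOne N f :=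
  Quot.sound ⟨M, N, r, f, rfl, rfl⟩

lemma sideload_post {Z Y₀ M A U V B : C} (g : Z ⟶ M ⊗ Y₀) (u : (M ⊗ A : C) ⟶ U ⊗ B)
    (r : U ⟶ V) : sideload g (u ≫ r ▷ B) = sideload g u ≫ r ▷ (B ⊗ Y₀) := by
  simp [sideload]

lemma sideload_whiskerRight {Z Y₀ M N A U B : C} (g : Z ⟶ N ⊗ Y₀) (r : N ⟶ M)
    (u : (M ⊗ A : C) ⟶ U ⊗ B) : sideload (g ≫ r ▷ Y₀) u = sideload g (r ▷ A ≫ u) := by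
  simp only [sideload, comp_whiskerRight, Category.assoc, associator_naturality_left_assoc,
    ← whisker_exchange_assoc, associator_inv_naturality_left_assoc]

lemma sideload_pre {Z Z' Y₀ M A U B : C} (p : Z' ⟶ Z) (g : Z ⟶ M ⊗ Y₀)
    (u : (M ⊗ A : C) ⟶ U ⊗ B) : sideload (p ≫ g) u = p ▷ A ≫ sideload g u := by
  simp [sideload]

/-- Sequential composition of a morphism with a 1-stage process that uses its memory. -/
def OneStage.after {Z Y₀ M A B : C} (g : Z ⟶ M ⊗ Y₀) :
    OneStage (M ⊗ A) B → OneStage (Z ⊗ A) (B ⊗ Y₀) :=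
  Quot.lift (fun x => mkOne x.1 (sideload g x.2)) (by
    rintro _ _ ⟨V, U, r, f, rfl, rfl⟩
    exact Quot.sound ⟨V, U, r, sideload g f, congrArg (Sigma.mk V) (sideload_post g f r), rfl⟩)

lemma OneStage.after_whiskerRight {Z Y₀ M N A B : C} (g : Z ⟶ N ⊗ Y₀) (r : N ⟶ M)
    (x : OneStage (M ⊗ A) B) :
    OneStage.after (g ≫ r ▷ Y₀) x = OneStage.after g (OneStage.pre (r ▷ A) x) := by
  obtain ⟨U, u⟩ := x
  exact congrArg (mkOne U) (sideload_whiskerRight g r u)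

lemma OneStage.after_pre {Z Z' Y₀ M A B : C} (p : Z' ⟶ Z) (g : Z ⟶ M ⊗ Y₀)
    (x : OneStage (M ⊗ A) B) :
    OneStage.after (p ≫ g) x = OneStage.pre (p ▷ A) (OneStage.after g x) := by
  obtain ⟨U, u⟩ := x
  exact congrArg (mkOne U) (sideload_pre p g u)

/-- Termination, with the continuations taken up to dinaturality. -/
lemma Terminating.exists_factorization {X₀ Y₀ : C} {a : OneStage X₀ Y₀} (ha : Terminating a) :
    ∃ (M₀ : C) (α₀ : X₀ ⟶ M₀ ⊗ Y₀)
      (s : ∀ (M : C) (f : X₀ ⟶ M ⊗ Y₀), mkOne M f = a → (M₀ ⟶ M)),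
      (∀ (M : C) (f : X₀ ⟶ M ⊗ Y₀) (h : mkOne M f = a), f = α₀ ≫ s M f h ▷ Y₀) ∧
      (∀ (M N : C) (f : X₀ ⟶ M ⊗ Y₀) (g : X₀ ⟶ N ⊗ Y₀) (hf : mkOne M f = a)
        (hg : mkOne N g = a) (A B : C) (x : OneStage (M ⊗ A) B) (y : OneStage (N ⊗ A) B),
        OneStage.after f x = OneStage.after g y →
          OneStage.pre (s M f hf ▷ A) x = OneStage.pre (s N g hg ▷ A) y) := by
  obtain ⟨M₀, α₀, s, hs, ht⟩ := ha
  refine ⟨M₀, α₀, s, hs, ?_⟩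
  rintro M N f g hf hg A B ⟨U, u⟩ ⟨V, v⟩ h
  exact ht M N f g hf hg A U V B u v h

/-! ### Merging consecutive stages into one -/

/-- The tensor of the `m + 1` inputs from position `n` on. -/
def inputs (X : Seq C) : ℕ → ℕ → C
  | 0, n => X n
  | m + 1, n => X n ⊗ inputs X m (n + 1)

/-- The tensor of the `m + 1` outputs from position `n` on, in reverse order. -/
def outputs (Y : Seq C) : ℕ → ℕ → C
  | 0, n => Y n
  | m + 1, n => outputs Y m (n + 1) ⊗ Y n

/-- The 1-stage process that performs `g` at position `n` and then the next `m` steps of `S`. -/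
def run {X Y : Seq C} {k : ℕ} (S : StageTup k X Y) :
    ∀ (m n : ℕ) (h : n + m < k + 1) {P : C}
      (_ : (P ⊗ X n : C) ⟶ S.M ⟨n, by omega⟩ ⊗ Y n), OneStage (P ⊗ inputs X m n) (outputs Y m n)
  | 0, _, _, _, g => mkOne _ g
  | m + 1, n, h, P, g =>
    OneStage.pre (α_ P (X n) (inputs X m (n + 1))).inv
      (OneStage.after g (run S m (n + 1) (by omega) (S.step ⟨n, by omega⟩)))

lemma run_whiskerRight {X Y : Seq C} {k : ℕ} (S : StageTup k X Y) (m n : ℕ)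
    (h : n + m < k + 1) {P Q : C} (p : Q ⟶ P)
    (g : (P ⊗ X n : C) ⟶ S.M ⟨n, by omega⟩ ⊗ Y n) :
    run S m n h (p ▷ X n ≫ g) = OneStage.pre (p ▷ inputs X m n) (run S m n h g) := by
  cases m with
  | zero => rfl
  | succ m =>
    simp only [run, OneStage.after_pre]
    refine (OneStage.pre_pre _ _ _).trans (.trans ?_ (OneStage.pre_pre _ _ _).symm)
    exact congrArg (OneStage.pre · _) (associator_inv_naturality_left _ _ _).symm

lemma run_truncStage {X Y : Seq C} {k : ℕ} (S : StageTup (k + 1) X Y) (m n : ℕ)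
    (h : n + m < k + 1) {P : C} (g : (P ⊗ X n : C) ⟶ S.M ⟨n, by omega⟩ ⊗ Y n) :
    run (truncStage k S) m n h g = run S m n (by omega) g := by
  induction m generalizing n P with
  | zero => rfl
  | succ m ih =>
    simp only [run]
    congr 2
    exact ih (n + 1) (by omega) _

lemma run_slide {X Y : Seq C} {k : ℕ} (M N : Fin (k + 1) → C) (r : ∀ i, N i ⟶ M i)
    (f0 : (𝟙_ C ⊗ X 0 : C) ⟶ N 0 ⊗ Y 0)
    (f : ∀ i : Fin k, (M i.castSucc ⊗ X (i.1 + 1) : C) ⟶ N i.succ ⊗ Y (i.1 + 1))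
    (m n : ℕ) (h : n + m < k + 1) {P : C}
    (g : (P ⊗ X n : C) ⟶ N ⟨n, by omega⟩ ⊗ Y n) :
    run (⟨M, f0 ≫ (r 0 ▷ Y 0), fun i => f i ≫ (r i.succ ▷ Y (i.1 + 1))⟩ : StageTup k X Y)
        m n h (g ≫ r ⟨n, by omega⟩ ▷ Y n) =
      run (⟨N, f0, fun i => (r i.castSucc ▷ X (i.1 + 1)) ≫ f i⟩ : StageTup k X Y) m n h g := by
  induction m generalizing n P with
  | zero => exact mkOne_whiskerRight _ _
  | succ m ih =>
    simp only [run]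
    congr 1
    refine (OneStage.after_whiskerRight _ _ _).trans (congrArg _ ?_)
    rw [← ih (n + 1) (by omega), ← run_whiskerRight]
    congr 1
    exact (Category.assoc _ _ _).symm

/-- The first `m + 1` stages of a `k`-stage process, merged into one. -/
def merge {X Y : Seq C} (m k : ℕ) (h : m ≤ k) :
    Stage k X Y → OneStage (𝟙_ C ⊗ inputs X m 0) (outputs Y m 0) :=
  Quot.lift (fun S => run S m 0 (by omega) S.head) (by
    rintro _ _ ⟨M, N, r, f0, f, rfl, rfl⟩
    exact run_slide M N r f0 f m 0 (by omega) f0)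

/-! ### Truncation maps -/

/-- The connecting map `π_{n+1,n}` on stage processes. -/
def Stage.trunc {X Y : Seq C} (n : ℕ) : Stage (n + 1) X Y → Stage n X Y :=
  Quot.map (truncStage n) (by
    rintro _ _ ⟨M, N, r, f0, f, rfl, rfl⟩
    exact ⟨fun i => M i.castSucc, fun i => N i.castSucc, fun i => r i.castSucc, f0,
      fun i => f i.castSucc, rfl, rfl⟩)

/-- The truncation of dinatural sequences. -/
def eSeq.trunc {X Y : Seq C} (n : ℕ) : eSeq X Y → Stage n X Y :=
  Quot.map (truncTup n) (by
    rintro _ _ ⟨M, N, r, f0, f, rfl, rfl⟩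
    exact ⟨fun i => M i.1, fun i => N i.1, fun i => r i.1, f0, fun i => f i.1, rfl, rfl⟩)

lemma merge_trunc {X Y : Seq C} (m k : ℕ) (h : m ≤ k) (x : Stage (k + 1) X Y) :
    merge m k h (Stage.trunc k x) = merge m (k + 1) (by omega) x := by
  obtain ⟨S⟩ := x
  exact run_truncStage S m 0 (by omega) S.head

lemma merge_eq_merge {X Y : Seq C} (x : ∀ n, Stage n X Y)
    (hx : ∀ n, Stage.trunc n (x (n + 1)) = x n) (m k : ℕ) (h : m ≤ k) :
    merge m k h (x k) = merge m m le_rfl (x m) := by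
  induction k, h using Nat.le_induction with
  | base => rfl
  | succ k h ih => rw [← merge_trunc m k h, hx, ih]

/-! ### Simulations between stage tuples -/

section Simulation

variable {X Y : Seq C} {n : ℕ} (S T : StageTup n X Y)

/-- The memory of `T` (for `true`) or of `S` (for `false`). -/
def mixMem (c : Bool) (i : Fin (n + 1)) : C := if c then T.M i else S.M i

/-- The first morphism of `T` or of `S`. -/
def mixHead : ∀ c : Bool, (𝟙_ C ⊗ X 0 : C) ⟶ mixMem S T c 0 ⊗ Y 0
  | true => T.head
  | false => S.head

/-- The steps of `T` or of `S`. -/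
def mixStep : ∀ (c : Bool) (i : Fin n),
    (mixMem S T c i.castSucc ⊗ X (i.1 + 1) : C) ⟶ mixMem S T c i.succ ⊗ Y (i.1 + 1)
  | true => T.step
  | false => S.step

/-- The comparison map between the memories. -/
def mixMap (r : ∀ i, T.M i ⟶ S.M i) : ∀ (c d : Bool) (_ : d ≤ c) (i : Fin (n + 1)),
    mixMem S T c i ⟶ mixMem S T d i
  | true, true, _, i => 𝟙 (T.M i)
  | true, false, _, i => r i
  | false, false, _, i => 𝟙 (S.M i)
  | false, true, h, _ => absurd h (by decide)

/-- The tuple that follows `T` as long as `c` is `true` and `S` afterwards. -/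
def mixTup (r : ∀ i, T.M i ⟶ S.M i) (c : Fin (n + 1) → Bool)
    (hc : ∀ i : Fin n, c i.succ ≤ c i.castSucc) : StageTup n X Y where
  M i := mixMem S T (c i) i
  head := mixHead S T (c 0)
  step i := mixStep S T (c i.castSucc) i ≫
    mixMap S T r (c i.castSucc) (c i.succ) (hc i) i.succ ▷ Y (i.1 + 1)

lemma mixTup_true (r : ∀ i, T.M i ⟶ S.M i) :
    mixTup S T r (fun _ => true) (fun _ => le_rfl) = T := by
  have h (i : Fin n) : T.step i ≫ 𝟙 (T.M i.succ) ▷ Y (i.1 + 1) = T.step i := by simp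
  exact congrArg (StageTup.mk T.M T.head) (funext h)

lemma mixTup_false (r : ∀ i, T.M i ⟶ S.M i) :
    mixTup S T r (fun _ => false) (fun _ => le_rfl) = S := by
  have h (i : Fin n) : S.step i ≫ 𝟙 (S.M i.succ) ▷ Y (i.1 + 1) = S.step i := by simp
  exact congrArg (StageTup.mk S.M S.head) (funext h)

variable {S T}

lemma mixHead_mixMap (r : ∀ i, T.M i ⟶ S.M i) (h0 : T.head ≫ r 0 ▷ Y 0 = S.head)
    (c d : Bool) (h : d ≤ c) :
    mixHead S T c ≫ mixMap S T r c d h 0 ▷ Y 0 = mixHead S T d := by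
  match c, d, h with
  | true, true, _ => exact (congrArg (T.head ≫ ·) (id_whiskerRight _ _)).trans (Category.comp_id _)
  | true, false, _ => exact h0
  | false, false, _ => exact (congrArg (S.head ≫ ·) (id_whiskerRight _ _)).trans (Category.comp_id _)

lemma mixStep_mixMap (r : ∀ i, T.M i ⟶ S.M i)
    (hr : ∀ i : Fin n, T.step i ≫ r i.succ ▷ Y (i.1 + 1) = r i.castSucc ▷ X (i.1 + 1) ≫ S.step i)
    (c d : Bool) (h : d ≤ c) (i : Fin n) :
    mixStep S T c i ≫ mixMap S T r c d h i.succ ▷ Y (i.1 + 1) =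
      mixMap S T r c d h i.castSucc ▷ X (i.1 + 1) ≫ mixStep S T d i := by
  match c, d, h with
  | true, true, _ =>
    change T.step i ≫ 𝟙 (T.M i.succ) ▷ Y (i.1 + 1) = 𝟙 (T.M i.castSucc) ▷ X (i.1 + 1) ≫ T.step i
    simp
  | true, false, _ => exact hr i
  | false, false, _ =>
    change S.step i ≫ 𝟙 (S.M i.succ) ▷ Y (i.1 + 1) = 𝟙 (S.M i.castSucc) ▷ X (i.1 + 1) ≫ S.step i
    simp

lemma mk_mixTup_shift (r : ∀ i, T.M i ⟶ S.M i) (h0 : T.head ≫ r 0 ▷ Y 0 = S.head)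
    (hr : ∀ i : Fin n, T.step i ≫ r i.succ ▷ Y (i.1 + 1) = r i.castSucc ▷ X (i.1 + 1) ≫ S.step i)
    (c : ℕ → Bool) (hc : ∀ i, c (i + 1) ≤ c i) :
    Quot.mk (StageRel n X Y) (mixTup S T r (fun i => c (i.1 + 1)) (fun i => hc (i.1 + 1))) =
      Quot.mk (StageRel n X Y) (mixTup S T r (fun i => c i.1) (fun i => hc i.1)) := by
  refine Quot.sound ⟨fun i => mixMem S T (c (i.1 + 1)) i, fun i => mixMem S T (c i.1) i,
    fun i => mixMap S T r _ _ (hc i.1) i, mixHead S T (c 0),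
    fun i => mixStep S T (c (i.1 + 1)) i, ?_, ?_⟩
  · exact congrArg (fun h => StageTup.mk _ h _) (mixHead_mixMap r h0 _ _ (hc 0)).symm
  · exact congrArg (StageTup.mk _ _) (funext fun i => mixStep_mixMap r hr _ _ (hc i.1) i)

/-- A map of memories that commutes with all steps identifies two stage processes. -/
lemma mk_eq_mk_of_simulation (r : ∀ i, T.M i ⟶ S.M i) (h0 : T.head ≫ r 0 ▷ Y 0 = S.head)
    (hr : ∀ i : Fin n, T.step i ≫ r i.succ ▷ Y (i.1 + 1) =
      r i.castSucc ▷ X (i.1 + 1) ≫ S.step i) :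
    Quot.mk (StageRel n X Y) T = Quot.mk (StageRel n X Y) S := by
  have key (j : ℕ) (c : ℕ → Bool) (hc : ∀ i, c (i + 1) ≤ c i) :
      Quot.mk (StageRel n X Y) (mixTup S T r (fun i => c (i.1 + j)) fun i => by
          have := hc (i.1 + j); rwa [Nat.add_right_comm] at this) =
        Quot.mk (StageRel n X Y) (mixTup S T r (fun i => c i.1) fun i => hc i.1) := by
    induction j generalizing c with
    | zero => rfl
    | succ j ih =>
      exact (ih (fun i => c (i + 1)) fun i => hc (i + 1)).trans (mk_mixTup_shift r h0 hr c hc)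
  have h := key (n + 1) (fun i => decide (i ≤ n)) (fun i => by
    by_cases hi : i + 1 ≤ n
    · simp [hi, Nat.le_of_succ_le hi]
    · simp [hi])
  have ht : (fun i : Fin (n + 1) => decide (i.1 ≤ n)) = fun _ => true := by
    funext i; simpa using Nat.le_of_lt_succ i.2
  have hf : (fun i : Fin (n + 1) => decide (i.1 + (n + 1) ≤ n)) = fun _ => false := by
    funext i; simpa using (by omega : n < i.1 + (n + 1))
  simp only [ht, hf, mixTup_true, mixTup_false] at h
  exact h.symm

end Simulation

/-! ### Factoring a compatible family of stage processes -/

/-- Morphisms to the `n`-th memories of all sufficiently long tuples of a family, with a common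
source, whose continuations agree when merged. -/
structure Front {X Y : Seq C} (S : ∀ k, StageTup k X Y) (n : ℕ) where
  P : C
  g : ∀ k (h : n < k + 1), (P ⊗ X n : C) ⟶ (S k).M ⟨n, h⟩ ⊗ Y n
  run_eq : ∀ (m k l : ℕ) (hk : n + m < k + 1) (hl : n + m < l + 1),
    run (S k) m n hk (g k (by omega)) = run (S l) m n hl (g l (by omega))

lemma Front.exists_next (hC : Productive C) {X Y : Seq C} {S : ∀ k, StageTup k X Y} {n : ℕ}
    (F : Front S n) :
    ∃ (G : Front S (n + 1)) (h : (F.P ⊗ X n : C) ⟶ G.P ⊗ Y n)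
      (s : ∀ k (hk : n < k + 1), G.P ⟶ (S k).M ⟨n, hk⟩),
      (∀ k hk, h ≫ s k hk ▷ Y n = F.g k hk) ∧
      ∀ k (hk : n < k), G.g k (by omega) = s k (by omega) ▷ X (n + 1) ≫ (S k).step ⟨n, hk⟩ := by
  obtain ⟨M₀, α₀, s, hs, ht⟩ :=
    (hC _ _ (mkOne _ (F.g n (by omega)))).exists_factorization
  have hF (k : ℕ) (hk : n < k + 1) : mkOne _ (F.g k hk) = mkOne _ (F.g n (by omega)) :=
    F.run_eq 0 k n hk (by omega)
  refine ⟨⟨M₀, fun k hk => s _ _ (hF k (by omega)) ▷ X (n + 1) ≫ (S k).step ⟨n, by omega⟩, ?_⟩,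
    α₀, fun k hk => s _ _ (hF k hk), fun k hk => (hs _ _ (hF k hk)).symm, fun _ _ => rfl⟩
  intro m k l hk hl
  rw [run_whiskerRight, run_whiskerRight]
  apply ht
  have := congrArg (OneStage.pre (α_ F.P (X n) (inputs X m (n + 1))).hom)
    (F.run_eq (m + 1) k l (by omega) (by omega))
  have hpre (z : OneStage ((F.P ⊗ X n) ⊗ inputs X m (n + 1)) (outputs Y m (n + 1) ⊗ Y n)) :
      OneStage.pre (α_ F.P (X n) (inputs X m (n + 1))).hom
        (OneStage.pre (α_ F.P (X n) (inputs X m (n + 1))).inv z) = z := by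
    rw [OneStage.pre_pre, Iso.hom_inv_id, OneStage.pre_id]
  exact (hpre _).symm.trans (this.trans (hpre _))

/-- A compatible family of stage processes consists of the truncations of one sequence. -/
lemma exists_truncTup_eq (hC : Productive C) {X Y : Seq C} (x : ∀ n, Stage n X Y)
    (hx : ∀ n, Stage.trunc n (x (n + 1)) = x n) :
    ∃ T : SeqTup X Y, ∀ n, Quot.mk (StageRel n X Y) (truncTup n T) = x n := by
  choose S hS using fun k => Quot.exists_rep (x k)
  let F₀ : Front S 0 :=
    { P := 𝟙_ C
      g := fun k _ => (S k).head
      run_eq := fun m k l hk hl => by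
        have h (k : ℕ) (hk : m ≤ k) :
            run (S k) m 0 (by omega) (S k).head = merge m m le_rfl (x m) := by
          rw [← merge_eq_merge x hx m k hk, ← hS k]
          rfl
        exact (h k (by omega)).trans (h l (by omega)).symm }
  choose next h s hs hg using fun (n : ℕ) (F : Front S n) => F.exists_next hC
  let F : ∀ n, Front S n := Nat.rec F₀ next
  refine ⟨⟨fun n => (F (n + 1)).P, h 0 F₀, fun n => h (n + 1) (F (n + 1))⟩, fun n => ?_⟩
  rw [← hS n]
  refine mk_eq_mk_of_simulation (fun i => s i.1 (F i.1) n i.2) (hs 0 F₀ n (by omega)) fun i => ?_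
  exact (hs (i.1 + 1) (F (i.1 + 1)) n (by omega)).trans (hg i.1 (F i.1) n i.2)

/-- **Observational sequences are the limit of the `n`-stage truncations.**
In a productive category, truncation descends to dinatural sequences and to the
connecting maps `π_{n+1,n} : Stage_{n+1} → Stage_n`; the canonical map from
`eSeq(X,Y)` to the limit `lim_n Stage_n(X,Y)` is surjective; and the induced map from
`oSeq(X,Y)` to the limit is a bijection. -/
theorem eSeq_to_limit_surjective (hC : Productive C) (X Y : Seq C) :
    ∃ (tr : ∀ n, eSeq X Y → Stage n X Y)
      (π : ∀ n, Stage (n + 1) X Y → Stage n X Y),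
      -- `tr` is the truncation of dinatural sequences
      (∀ (n : ℕ) (T : SeqTup X Y),
        tr n (Quot.mk (SeqRel X Y) T) = Quot.mk (StageRel n X Y) (truncTup n T)) ∧
      -- `π` is the truncation of stage tuples
      (∀ (n : ℕ) (S : StageTup (n + 1) X Y),
        π n (Quot.mk (StageRel (n + 1) X Y) S) =
          Quot.mk (StageRel n X Y) (truncStage n S)) ∧
      -- the truncations of a dinatural sequence are compatible
      (∃ hcomp : ∀ (e : eSeq X Y) (n : ℕ), π n (tr (n + 1) e) = tr n e,
        -- the canonical map `eSeq(X,Y) → lim_n Stage_n(X,Y)` is surjective …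
        Function.Surjective
          (fun e => (⟨fun n => tr n e, hcomp e⟩ :
            { s : ∀ n, Stage n X Y // ∀ n, π n (s (n + 1)) = s n }))) ∧
      -- … and the truncations of observational sequences are compatible and induce a
      -- bijection `oSeq(X,Y) ≅ lim_n Stage_n(X,Y)`
      (∃ hcompO : ∀ (o : oSeq X Y) (n : ℕ), π n (oTrunc (n + 1) o) = oTrunc n o,
        Function.Bijective
          (fun o => (⟨fun n => oTrunc n o, hcompO o⟩ :
            { s : ∀ n, Stage n X Y // ∀ n, π n (s (n + 1)) = s n }))) := by
  have hsurj (x : ∀ n, Stage n X Y) (hx : ∀ n, Stage.trunc n (x (n + 1)) = x n) :=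
    exists_truncTup_eq hC x hx
  refine ⟨eSeq.trunc, Stage.trunc, fun _ _ => rfl, fun _ _ => rfl, ⟨?_, ?_⟩, ⟨?_, ?_, ?_⟩⟩
  · rintro ⟨T⟩ n
    rfl
  · rintro ⟨x, hx⟩
    obtain ⟨T, hT⟩ := hsurj x hx
    exact ⟨Quot.mk _ T, Subtype.ext (funext hT)⟩
  · rintro ⟨T⟩ n
    rfl
  · rintro ⟨T⟩ ⟨T'⟩ h
    exact Quot.sound fun n => congrFun (congrArg Subtype.val h) n
  · rintro ⟨x, hx⟩
    obtain ⟨T, hT⟩ := hsurj x hx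
    exact ⟨Quot.mk _ T, Subtype.ext (funext hT)⟩

end Stmt17
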